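/- Let k ∈ {0,1} and T > 0. Suppose the coefficients g^{jl} : ℤ^d × [0,T] → ℝ (j,l = 1,…,d) satisfy g^{jl} ∈ L^∞([0,T]; ℓ^∞(ℤ^d)) ∩ C⁰([0,T]; ℓ^∞(ℤ^d)), the data satisfy f, g ∈ ℓ^{2,k}(ℤ^d), and F ∈ L¹([0,T]; ℓ^{2,k}(ℤ^d)) ∩ C⁰([0,T]; ℓ^{2,k}(ℤ^d)). Then there exists a unique u ∈ C²([0,T]; ℓ^{2,k}(ℤ^d)) such that ∂_t² u(x,t) − Σ_{j,l=1}^d g^{jl}(x,t)·(∂_j∂_l u)(x,t) = F(x,t) for all (x,t) ∈ ℤ^d × [0,T], u(·,0) = f, and ∂_t u(·,0) = g. -/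

import Mathlib

/-!
Multiplication by the weight `⟨·⟩^k` identifies `ℓ^{2,k}(ℤ^d)` with `ℓ²(ℤ^d)`. For `k ≤ 1` it
conjugates `∂ⱼ` into a bounded operator, by the Schur test: the kernel is supported on the
coordinate lines in direction `eⱼ`, and its squared modulus is at most
`4 (⟨x - m⟩⁻² + ⟨m⟩⁻²) |φⱼ(x - m)|`, where the first factor is summable in `m` along such a line and
the second in `x`, both uniformly. The wave equation thus becomes a linear second-order ODE in `ℓ²`
whose bounded operators and source depend continuously on time.

Such an ODE is an instance of a first-order one with a field that is Lipschitz uniformly in time.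
Picard–Lindelöf solves it on the whole interval once the field is made bounded by composing it with
the radial retraction onto a ball. By Grönwall's inequality, a ball chosen large enough is never
left by the solution, which therefore solves the original equation.
-/

open scoped BigOperators ENNReal NNReal
open MeasureTheory Filter

noncomputable section

/-- Kernel `φⱼ` of the discrete partial derivative on `ℤ^d`:
`φⱼ(m) = -4i/(π(4a²-1))` if `m = a·eⱼ`, and `0` otherwise. -/
def phi (d : ℕ) (j : Fin d) (m : Fin d → ℤ) : ℂ :=
  if ∀ i, i ≠ j → m i = 0 then
    (-4 * Complex.I) / ((Real.pi : ℂ) * (4 * (m j : ℂ) ^ 2 - 1))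
  else 0

/-- Discrete convolution on `ℤ^d`. -/
def dconv {d : ℕ} (u v : (Fin d → ℤ) → ℂ) (k : Fin d → ℤ) : ℂ :=
  ∑' m, u m * v (k - m)

/-- Discrete partial derivative `∂ⱼ u = u ∗ φⱼ`. -/
def pd {d : ℕ} (j : Fin d) (u : (Fin d → ℤ) → ℂ) : (Fin d → ℤ) → ℂ :=
  dconv u (phi d j)

/-- Japanese bracket `⟨m⟩ = (1+|m|²)^{1/2}`. -/
def jap {d : ℕ} (m : Fin d → ℤ) : ℝ :=
  Real.sqrt (1 + ∑ i, ((m i : ℝ)) ^ 2)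

open scoped Classical in
/-- `ℓ^p` norm on `ℤ^d` (valued in `ℝ≥0∞`), `1 ≤ p ≤ ∞`. -/
def lpn {d : ℕ} (p : ℝ≥0∞) (f : (Fin d → ℤ) → ℂ) : ℝ≥0∞ :=
  if p = ⊤ then ⨆ m, (‖f m‖₊ : ℝ≥0∞)
  else (∑' m, (‖f m‖₊ : ℝ≥0∞) ^ p.toReal) ^ (1 / p.toReal)

/-- Weighted `ℓ^{2,k}` norm: the `ℓ²` norm of `m ↦ ⟨m⟩^k f(m)`. -/
def w2 {d : ℕ} (k : ℕ) (f : (Fin d → ℤ) → ℂ) : ℝ≥0∞ :=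
  lpn 2 (fun m => ((jap m ^ k : ℝ) : ℂ) * f m)

/-- Discrete Laplacian on `ℤ^d`. -/
def lap {d : ℕ} (u : (Fin d → ℤ) → ℂ) (x : Fin d → ℤ) : ℂ :=
  ∑ j, (u (x + Pi.single j 1) + u (x - Pi.single j 1) - 2 * u x)

/-- Continuity of a curve `t ↦ f(·,t)` into `ℓ^{2,k}(ℤ^d)` on a set `S` of times. -/
def ContW {d : ℕ} (k : ℕ) (S : Set ℝ) (f : ℝ → (Fin d → ℤ) → ℂ) : Prop :=
  ∀ t ∈ S, Tendsto (fun s => w2 k (fun m => f s m - f t m))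
    (nhdsWithin t S) (nhds (0 : ℝ≥0∞))

/-- `f'` is the derivative (in the `ℓ^{2,k}(ℤ^d)` norm) of the curve `t ↦ f(·,t)` on `S`. -/
def DerivW {d : ℕ} (k : ℕ) (S : Set ℝ) (f f' : ℝ → (Fin d → ℤ) → ℂ) : Prop :=
  ∀ t ∈ S, Tendsto
    (fun s => w2 k (fun m => (s - t)⁻¹ • (f s m - f t m) - f' t m))
    (nhdsWithin t (S \ {t})) (nhds (0 : ℝ≥0∞))

/-- `u ∈ C²(S; ℓ^{2,k}(ℤ^d))`, with first and second time derivatives `u1`, `u2`. -/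
structure IsC2 {d : ℕ} (k : ℕ) (S : Set ℝ) (u u1 u2 : ℝ → (Fin d → ℤ) → ℂ) : Prop where
  mem0 : ∀ t ∈ S, w2 k (u t) < ⊤
  mem1 : ∀ t ∈ S, w2 k (u1 t) < ⊤
  mem2 : ∀ t ∈ S, w2 k (u2 t) < ⊤
  cont0 : ContW k S u
  cont1 : ContW k S u1
  cont2 : ContW k S u2
  hder1 : DerivW k S u u1
  hder2 : DerivW k S u1 u2

/-- `ℓ^∞` norm of a real-valued function on `ℤ^d` (valued in `ℝ≥0∞`). -/
def linf {d : ℕ} (f : (Fin d → ℤ) → ℝ) : ℝ≥0∞ := ⨆ m, (‖f m‖₊ : ℝ≥0∞)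

section ODE

open Set

variable {E : Type*} [NormedAddCommGroup E]

lemma exists_forall_norm_le_mul_norm_add_of_lipschitzWith {f : ℝ → E → E} {K : ℝ≥0} {a b : ℝ}
    (hlip : ∀ t ∈ Icc a b, LipschitzWith K (f t))
    (hcont : ContinuousOn (f · 0) (Icc a b)) :
    ∃ M : ℝ≥0, ∀ t ∈ Icc a b, ∀ x, ‖f t x‖ ≤ K * ‖x‖ + M := by
  obtain ⟨M, hM⟩ := isCompact_Icc.exists_bound_of_continuousOn hcont
  refine ⟨M.toNNReal, fun t ht x => ?_⟩
  calc ‖f t x‖ ≤ ‖f t x - f t 0‖ + ‖f t 0‖ := norm_le_norm_sub_add _ _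
    _ ≤ K * ‖x‖ + M.toNNReal := by
        gcongr
        · simpa using (hlip t ht).norm_sub_le x 0
        · exact (hM t ht).trans M.le_coe_toNNReal

lemma exists_forall_lipschitzWith_clm_add {𝕜 : Type*} [NontriviallyNormedField 𝕜]
    [NormedSpace 𝕜 E] {A : ℝ → E →L[𝕜] E} {S : Set ℝ} (hS : IsCompact S)
    (hA : ContinuousOn A S) (c : ℝ → E) :
    ∃ K : ℝ≥0, ∀ t ∈ S, LipschitzWith K fun x => A t x + c t := by
  obtain ⟨M, hM⟩ := hS.exists_bound_of_continuousOn hA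
  refine ⟨M.toNNReal, fun t ht => ?_⟩
  have hle : ‖A t‖₊ ≤ M.toNNReal := NNReal.coe_le_coe.1 ((hM t ht).trans M.le_coe_toNNReal)
  simpa using ((A t).lipschitz.weaken hle).add (LipschitzWith.const (c t))

variable [NormedSpace ℝ E]

/-- The radial retraction of a normed space onto its closed ball of radius `R > 0`. -/
def radialRetraction (R : ℝ) (x : E) : E := (R / max R ‖x‖) • x

lemma radialRetraction_eq_self {R : ℝ} (hR : 0 < R) {x : E} (hx : ‖x‖ ≤ R) :
    radialRetraction R x = x := by
  rw [radialRetraction, max_eq_left hx, div_self hR.ne', one_smul]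

lemma norm_radialRetraction {R : ℝ} (hR : 0 < R) (x : E) :
    ‖radialRetraction R x‖ = R / max R ‖x‖ * ‖x‖ := by
  rw [radialRetraction, norm_smul, Real.norm_of_nonneg (by positivity)]

lemma norm_radialRetraction_le_radius {R : ℝ} (hR : 0 < R) (x : E) :
    ‖radialRetraction R x‖ ≤ R := by
  have hm : 0 < max R ‖x‖ := lt_max_of_lt_left hR
  rw [norm_radialRetraction hR, div_mul_eq_mul_div, div_le_iff₀ hm]
  gcongr
  exact le_max_right _ _

lemma norm_radialRetraction_le {R : ℝ} (hR : 0 < R) (x : E) : ‖radialRetraction R x‖ ≤ ‖x‖ := by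
  rw [norm_radialRetraction hR]
  exact mul_le_of_le_one_left (norm_nonneg x)
    ((div_le_one (lt_max_of_lt_left hR)).2 (le_max_left _ _))

lemma lipschitzWith_radialRetraction {R : ℝ} (hR : 0 < R) :
    LipschitzWith 2 (radialRetraction R : E → E) := by
  refine LipschitzWith.of_dist_le_mul fun x y => ?_
  set m := max R ‖x‖
  set n := max R ‖y‖
  have hm : 0 < m := lt_max_of_lt_left hR
  have hn : 0 < n := lt_max_of_lt_left hR
  have hmn : |n - m| ≤ ‖x - y‖ := by
    rw [abs_sub_comm]
    exact (abs_max_sub_max_le_max R ‖x‖ R ‖y‖).trans (by simpa using abs_norm_sub_norm_le x y)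
  have hsplit : radialRetraction R x - radialRetraction R y =
      (R / m) • (x - y) + (R / m * ((n - m) / n)) • y := by
    have hcoef : R / m * ((n - m) / n) = R / m - R / n := by field_simp
    rw [hcoef, radialRetraction, radialRetraction, smul_sub, sub_smul]
    abel
  have hRm : R / m ≤ 1 := (div_le_one hm).2 (le_max_left _ _)
  have hsecond : ‖(R / m * ((n - m) / n)) • y‖ ≤ ‖x - y‖ := by
    have hcoef : ‖R / m * ((n - m) / n)‖ = R / m * (|n - m| / n) := by
      rw [Real.norm_eq_abs, abs_mul, abs_div (n - m), abs_of_pos hn, abs_of_pos (div_pos hR hm)]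
    rw [norm_smul, hcoef]
    calc R / m * (|n - m| / n) * ‖y‖ ≤ 1 * (|n - m| / n) * n := by
          gcongr
          exact le_max_right _ _
      _ = |n - m| := by field_simp
      _ ≤ ‖x - y‖ := hmn
  calc dist (radialRetraction R x) (radialRetraction R y)
      ≤ ‖(R / m) • (x - y)‖ + ‖(R / m * ((n - m) / n)) • y‖ := by
        rw [dist_eq_norm, hsplit]
        exact norm_add_le _ _
    _ ≤ ‖x - y‖ + ‖x - y‖ := by
        refine add_le_add ?_ hsecond
        rw [norm_smul, Real.norm_of_nonneg (by positivity : 0 ≤ R / m)]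
        exact mul_le_of_le_one_left (norm_nonneg _) hRm
    _ = (2 : ℝ≥0) * dist x y := by rw [dist_eq_norm, NNReal.coe_ofNat, two_mul]

lemma exists_forall_hasDerivWithinAt_Icc_of_bounded [CompleteSpace E] {f : ℝ → E → E}
    {K C : ℝ≥0} {a b : ℝ} (hab : a ≤ b) (hlip : ∀ t ∈ Icc a b, LipschitzWith K (f t))
    (hcont : ∀ x, ContinuousOn (f · x) (Icc a b)) (hbound : ∀ t ∈ Icc a b, ∀ x, ‖f t x‖ ≤ C)
    (x₀ : E) :
    ∃ y : ℝ → E, y a = x₀ ∧ ∀ t ∈ Icc a b, HasDerivWithinAt y (f t (y t)) (Icc a b) t := by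
  have hf : IsPicardLindelof f (⟨a, left_mem_Icc.2 hab⟩ : Icc a b) x₀
      (C * (b - a).toNNReal) 0 C K :=
    { lipschitzOnWith := fun t ht => (hlip t ht).lipschitzOnWith
      continuousOn := fun x _ => hcont x
      norm_le := fun t ht x _ => hbound t ht x
      mul_max_le := by simp [sub_nonneg.2 hab] }
  exact hf.exists_eq_forall_mem_Icc_hasDerivWithinAt₀

lemma hasDerivWithinAt_Ici_of_Icc {y : ℝ → E} {y' : E} {a b t : ℝ} (ht : t ∈ Ico a b)
    (hy : HasDerivWithinAt y y' (Icc a b) t) : HasDerivWithinAt y y' (Ici t) t :=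
  hy.mono_of_mem_nhdsWithin (mem_of_superset (Icc_mem_nhdsGE ht.2) (Icc_subset_Icc_left ht.1))

theorem exists_forall_hasDerivWithinAt_Icc [CompleteSpace E] {f : ℝ → E → E} {K : ℝ≥0} {a b : ℝ}
    (hab : a ≤ b) (hlip : ∀ t ∈ Icc a b, LipschitzWith K (f t))
    (hcont : ∀ x, ContinuousOn (f · x) (Icc a b)) (x₀ : E) :
    ∃ y : ℝ → E, y a = x₀ ∧ ∀ t ∈ Icc a b, HasDerivWithinAt y (f t (y t)) (Icc a b) t := by
  obtain ⟨M, hM⟩ := exists_forall_norm_le_mul_norm_add_of_lipschitzWith hlip (hcont 0)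
  set R : ℝ≥0 := (gronwallBound ‖x₀‖ K M (b - a)).toNNReal + 1
  have hR : (0 : ℝ) < R := by positivity
  obtain ⟨y, hya, hy⟩ := exists_forall_hasDerivWithinAt_Icc_of_bounded
    (f := fun t x => f t (radialRetraction R x)) (C := K * R + M) hab
    (fun t ht => (hlip t ht).comp (lipschitzWith_radialRetraction hR)) (fun x => hcont _)
    (fun t ht x => (hM t ht _).trans (by
      push_cast
      gcongr
      exact norm_radialRetraction_le_radius hR x)) x₀
  have hyR : ∀ t ∈ Icc a b, ‖y t‖ ≤ R := by
    intro t ht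
    calc ‖y t‖ ≤ gronwallBound ‖x₀‖ K M (t - a) :=
          norm_le_gronwallBound_of_norm_deriv_right_le (fun t ht => (hy t ht).continuousWithinAt)
            (fun t ht => hasDerivWithinAt_Ici_of_Icc ht (hy t (Ico_subset_Icc_self ht)))
            (by rw [hya])
            (fun t ht => (hM t (Ico_subset_Icc_self ht) _).trans (by
              gcongr
              exact norm_radialRetraction_le hR _)) t ht
      _ ≤ gronwallBound ‖x₀‖ K M (b - a) :=
          gronwallBound_mono (norm_nonneg _) M.2 K.2 (sub_le_sub_right ht.2 a)
      _ ≤ R := (Real.le_coe_toNNReal _).trans (by simp [R])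
  refine ⟨y, hya, fun t ht => ?_⟩
  simpa only [radialRetraction_eq_self hR (hyR t ht)] using hy t ht

theorem eqOn_Icc_of_hasDerivWithinAt {f : ℝ → E → E} {K : ℝ≥0} {a b : ℝ}
    (hlip : ∀ t ∈ Icc a b, LipschitzWith K (f t)) {y z : ℝ → E}
    (hy : ∀ t ∈ Icc a b, HasDerivWithinAt y (f t (y t)) (Icc a b) t)
    (hz : ∀ t ∈ Icc a b, HasDerivWithinAt z (f t (z t)) (Icc a b) t) (ha : y a = z a) :
    EqOn y z (Icc a b) :=
  ODE_solution_unique_of_mem_Icc_right (s := fun _ => univ)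
    (fun t ht => (hlip t (Ico_subset_Icc_self ht)).lipschitzOnWith)
    (fun t ht => (hy t ht).continuousWithinAt)
    (fun t ht => hasDerivWithinAt_Ici_of_Icc ht (hy t (Ico_subset_Icc_self ht)))
    (fun _ _ => mem_univ _) (fun t ht => (hz t ht).continuousWithinAt)
    (fun t ht => hasDerivWithinAt_Ici_of_Icc ht (hz t (Ico_subset_Icc_self ht)))
    (fun _ _ => mem_univ _) ha

/-- The first-order vector field `(x, w) ↦ (w, f(t, x))` on phase space equivalent to the
second-order equation `u'' = f(t, u)`. -/
def phaseField {X : Type*} (f : ℝ → X → X) (t : ℝ) (p : X × X) : X × X := (p.2, f t p.1)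

lemma lipschitzWith_phaseField {X : Type*} [PseudoEMetricSpace X] {f : ℝ → X → X}
    {K : ℝ≥0} {t : ℝ} (hf : LipschitzWith K (f t)) :
    LipschitzWith (max 1 (K * 1)) (phaseField f t) :=
  LipschitzWith.prod_snd.prodMk (hf.comp LipschitzWith.prod_fst)

/-- `u` solves the second-order equation `u'' = f(t, u)` on the set of times `S`, with velocity
`u' = v`; at the endpoints of `S` the derivatives are one-sided. -/
structure SolvesSecondOrder (S : Set ℝ) (f : ℝ → E → E) (u v : ℝ → E) : Prop where
  hasDerivWithinAt : ∀ t ∈ S, HasDerivWithinAt u (v t) S t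
  hasDerivWithinAt_velocity : ∀ t ∈ S, HasDerivWithinAt v (f t (u t)) S t

lemma solvesSecondOrder_iff {S : Set ℝ} {f : ℝ → E → E} {u v : ℝ → E} :
    SolvesSecondOrder S f u v ↔
      ∀ t ∈ S, HasDerivWithinAt (fun s => (u s, v s)) (phaseField f t (u t, v t)) S t := by
  refine ⟨fun h t ht => (h.1 t ht).prodMk (h.2 t ht), fun h => ⟨fun t ht => ?_, fun t ht => ?_⟩⟩
  · simpa using! hasFDerivAt_fst.comp_hasDerivWithinAt t (h t ht)
  · simpa using! hasFDerivAt_snd.comp_hasDerivWithinAt t (h t ht)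

theorem exists_solvesSecondOrder_Icc [CompleteSpace E] {f : ℝ → E → E} {K : ℝ≥0} {a b : ℝ}
    (hab : a ≤ b) (hlip : ∀ t ∈ Icc a b, LipschitzWith K (f t))
    (hcont : ∀ x, ContinuousOn (f · x) (Icc a b)) (x₀ v₀ : E) :
    ∃ u v : ℝ → E, SolvesSecondOrder (Icc a b) f u v ∧ u a = x₀ ∧ v a = v₀ := by
  obtain ⟨y, hya, hy⟩ := exists_forall_hasDerivWithinAt_Icc hab
    (fun t ht => lipschitzWith_phaseField (hlip t ht))
    (fun p => continuousOn_const.prodMk (hcont p.1)) (x₀, v₀)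
  exact ⟨fun t => (y t).1, fun t => (y t).2, solvesSecondOrder_iff.2 hy, congrArg Prod.fst hya,
    congrArg Prod.snd hya⟩

theorem SolvesSecondOrder.eqOn_Icc {f : ℝ → E → E} {K : ℝ≥0} {a b : ℝ}
    (hlip : ∀ t ∈ Icc a b, LipschitzWith K (f t)) {u v u' v' : ℝ → E}
    (h : SolvesSecondOrder (Icc a b) f u v) (h' : SolvesSecondOrder (Icc a b) f u' v')
    (hu : u a = u' a) (hv : v a = v' a) : EqOn u u' (Icc a b) := fun t ht =>
  congrArg Prod.fst (eqOn_Icc_of_hasDerivWithinAt (fun t ht => lipschitzWith_phaseField (hlip t ht))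
    (solvesSecondOrder_iff.1 h) (solvesSecondOrder_iff.1 h') (by rw [hu, hv]) ht)

variable {𝕜 : Type*} [NontriviallyNormedField 𝕜] [NormedSpace 𝕜 E] {a b : ℝ}
  {A : ℝ → E →L[𝕜] E} {c : ℝ → E}

theorem exists_solvesSecondOrder_Icc_linear [CompleteSpace E] (hab : a ≤ b)
    (hA : ContinuousOn A (Icc a b)) (hc : ContinuousOn c (Icc a b)) (x₀ v₀ : E) :
    ∃ u v : ℝ → E, SolvesSecondOrder (Icc a b) (fun t x => A t x + c t) u v ∧
      u a = x₀ ∧ v a = v₀ := by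
  obtain ⟨K, hK⟩ := exists_forall_lipschitzWith_clm_add isCompact_Icc hA c
  exact exists_solvesSecondOrder_Icc hab hK
    (fun x => (hA.clm_apply continuousOn_const).add hc) x₀ v₀

theorem SolvesSecondOrder.eqOn_Icc_linear {u v u' v' : ℝ → E} (hA : ContinuousOn A (Icc a b))
    (h : SolvesSecondOrder (Icc a b) (fun t x => A t x + c t) u v)
    (h' : SolvesSecondOrder (Icc a b) (fun t x => A t x + c t) u' v')
    (hu : u a = u' a) (hv : v a = v' a) : EqOn u u' (Icc a b) := by
  obtain ⟨K, hK⟩ := exists_forall_lipschitzWith_clm_add isCompact_Icc hA c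
  exact h.eqOn_Icc hK h' hu hv

end ODE

section Schur

variable {ι κ : Type*}

lemma ennreal_tsum_mul_sq_le (f g : ι → ℝ≥0∞) :
    (∑' i, f i * g i) ^ 2 ≤ (∑' i, f i ^ 2) * ∑' i, g i ^ 2 := by
  let _ : MeasurableSpace ι := ⊤
  have h := ENNReal.lintegral_mul_le_Lp_mul_Lq (Measure.count (α := ι)) Real.HolderConjugate.two_two
    (f := f) (g := g) (by fun_prop) (by fun_prop)
  simp only [lintegral_count, Pi.mul_apply, ENNReal.rpow_ofNat] at h
  calc (∑' i, f i * g i) ^ 2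
      ≤ ((∑' i, f i ^ 2) ^ (1 / 2 : ℝ) * (∑' i, g i ^ 2) ^ (1 / 2 : ℝ)) ^ 2 := by gcongr
    _ = (∑' i, f i ^ 2) * ∑' i, g i ^ 2 := by
      rw [mul_pow, ← ENNReal.rpow_mul_natCast, ← ENNReal.rpow_mul_natCast]
      simp

theorem schur_test {K P Q : ι → κ → ℝ≥0∞} {A B : ℝ≥0∞}
    (hK : ∀ x y, K x y ^ 2 ≤ P x y * Q x y) (hP : ∀ x, ∑' y, P x y ≤ A)
    (hQ : ∀ y, ∑' x, Q x y ≤ B) (u : κ → ℝ≥0∞) :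
    ∑' x, (∑' y, K x y * u y) ^ 2 ≤ A * B * ∑' y, u y ^ 2 := by
  have hsqrt (a : ℝ≥0∞) : (a ^ (1 / 2 : ℝ)) ^ 2 = a := by
    rw [← ENNReal.rpow_mul_natCast]
    simp
  have hle : ∀ x y, K x y ≤ P x y ^ (1 / 2 : ℝ) * Q x y ^ (1 / 2 : ℝ) := fun x y => by
    rw [← ENNReal.mul_rpow_of_nonneg _ _ (by positivity)]
    exact (ENNReal.pow_le_pow_left_iff two_ne_zero).1 ((hK x y).trans_eq (hsqrt _).symm)
  have hrow : ∀ x, (∑' y, K x y * u y) ^ 2 ≤ A * ∑' y, Q x y * u y ^ 2 := fun x =>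
    calc (∑' y, K x y * u y) ^ 2
        ≤ (∑' y, P x y ^ (1 / 2 : ℝ) * (Q x y ^ (1 / 2 : ℝ) * u y)) ^ 2 := by
          gcongr ?_ ^ 2
          refine ENNReal.tsum_le_tsum fun y => ?_
          rw [← mul_assoc]
          gcongr
          exact hle x y
      _ ≤ (∑' y, P x y) * ∑' y, Q x y * u y ^ 2 := by
          simpa only [mul_pow, hsqrt] using ennreal_tsum_mul_sq_le (fun y => P x y ^ (1 / 2 : ℝ))
            (fun y => Q x y ^ (1 / 2 : ℝ) * u y)
      _ ≤ A * ∑' y, Q x y * u y ^ 2 := by gcongr; exact hP x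
  calc ∑' x, (∑' y, K x y * u y) ^ 2 ≤ ∑' x, A * ∑' y, Q x y * u y ^ 2 :=
        ENNReal.tsum_le_tsum hrow
    _ = A * ∑' y, (∑' x, Q x y) * u y ^ 2 := by
        simp_rw [ENNReal.tsum_mul_left, ← ENNReal.tsum_mul_right]
        rw [ENNReal.tsum_comm]
    _ ≤ A * ∑' y, B * u y ^ 2 := by gcongr with y; exact hQ y
    _ = A * B * ∑' y, u y ^ 2 := by rw [ENNReal.tsum_mul_left, mul_assoc]

section Norm

variable {E : ι → Type*} [∀ i, NormedAddCommGroup (E i)]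

lemma memℓp_two_iff_tsum_enorm_sq {f : ∀ i, E i} : Memℓp f 2 ↔ ∑' i, ‖f i‖ₑ ^ 2 ≠ ⊤ := by
  have hsq : ∀ i, ‖f i‖ₑ ^ 2 = ‖‖f i‖ ^ 2‖ₑ := fun i => by rw [enorm_pow, enorm_norm]
  simp_rw [hsq, tsum_enorm_ne_top_iff_summable_norm]
  simp [memℓp_gen_iff]

lemma lp_enorm_sq_eq_tsum (U : lp E 2) : ‖U‖ₑ ^ 2 = ∑' i, ‖U i‖ₑ ^ 2 := by
  have h := lp.norm_rpow_eq_tsum (p := 2) (by simp) U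
  have hs := (lp.memℓp U).summable (p := 2) (by simp)
  simp only [ENNReal.toReal_ofNat, Real.rpow_ofNat] at h hs
  simp_rw [← ofReal_norm, ← ENNReal.ofReal_pow (norm_nonneg _)]
  rw [h, ENNReal.ofReal_tsum_of_nonneg (fun _ => by positivity) hs]

lemma lp_tsum_enorm_sq_ne_top (U : lp E 2) : ∑' i, ‖U i‖ₑ ^ 2 ≠ ⊤ :=
  memℓp_two_iff_tsum_enorm_sq.1 (lp.memℓp U)

end Norm

lemma continuous_of_forall_enorm_sq_le {V W F : Type*} [SeminormedAddCommGroup V]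
    [SeminormedAddCommGroup W] [FunLike F V W] [AddMonoidHomClass F V W] (D : F) {C : ℝ≥0∞}
    (hC : C ≠ ⊤) (hD : ∀ U, ‖D U‖ₑ ^ 2 ≤ C * ‖U‖ₑ ^ 2) : Continuous D := by
  refine AddMonoidHomClass.continuous_of_bound D √C.toReal fun U => ?_
  have hsq := ENNReal.toReal_mono (ENNReal.mul_ne_top hC (by simp)) (hD U)
  simp only [ENNReal.toReal_pow, ENNReal.toReal_mul, toReal_enorm] at hsq
  refine le_of_sq_le_sq ?_ (by positivity)
  rwa [mul_pow, Real.sq_sqrt ENNReal.toReal_nonneg]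

theorem exists_clm_lp_two_of_schur {𝕜 : Type*} [NormedField 𝕜] [CompleteSpace 𝕜]
    {K : ι → κ → 𝕜} {P Q : ι → κ → ℝ≥0∞} {A B : ℝ≥0∞}
    (hA : A ≠ ⊤) (hB : B ≠ ⊤) (hK : ∀ x y, ‖K x y‖ₑ ^ 2 ≤ P x y * Q x y)
    (hP : ∀ x, ∑' y, P x y ≤ A) (hQ : ∀ y, ∑' x, Q x y ≤ B) :
    ∃ D : lp (fun _ : κ => 𝕜) 2 →L[𝕜] lp (fun _ : ι => 𝕜) 2,
      ∀ U x, D U x = ∑' y, K x y * U y := by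
  have hAB : A * B ≠ ⊤ := ENNReal.mul_ne_top hA hB
  have hschur (U : lp (fun _ : κ => 𝕜) 2) :
      ∑' x, (∑' y, ‖K x y * U y‖ₑ) ^ 2 ≤ A * B * ∑' y, ‖U y‖ₑ ^ 2 := by
    simpa only [enorm_mul] using schur_test hK hP hQ fun y => ‖U y‖ₑ
  have hsum (U : lp (fun _ : κ => 𝕜) 2) (x : ι) : Summable fun y => K x y * U y := by
    have hfin := ne_top_of_le_ne_top
      (ENNReal.mul_ne_top hAB (lp_tsum_enorm_sq_ne_top U)) (hschur U)
    have hx := ENNReal.ne_top_of_tsum_ne_top hfin x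
    rw [Ne, ENNReal.pow_eq_top_iff, not_and_or] at hx
    exact (tsum_enorm_ne_top_iff_summable_norm.1 (hx.resolve_right (by simp))).of_norm
  have hbound (U : lp (fun _ : κ => 𝕜) 2) :
      ∑' x, ‖∑' y, K x y * U y‖ₑ ^ 2 ≤ A * B * ∑' y, ‖U y‖ₑ ^ 2 :=
    (ENNReal.tsum_le_tsum fun x => by gcongr; exact enorm_tsum_le_tsum_enorm).trans (hschur U)
  let D : lp (fun _ : κ => 𝕜) 2 →ₗ[𝕜] lp (fun _ : ι => 𝕜) 2 :=
    { toFun := fun U => ⟨fun x => ∑' y, K x y * U y, memℓp_two_iff_tsum_enorm_sq.2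
        (ne_top_of_le_ne_top (ENNReal.mul_ne_top hAB (lp_tsum_enorm_sq_ne_top U)) (hbound U))⟩
      map_add' := fun U V => by
        ext x
        simp only [lp.coeFn_add, Pi.add_apply, mul_add]
        exact (hsum U x).tsum_add (hsum V x)
      map_smul' := fun r U => by
        ext x
        simp only [lp.coeFn_smul, Pi.smul_apply, smul_eq_mul, mul_left_comm _ r, tsum_mul_left,
          RingHom.id_apply] }
  refine ⟨⟨D, continuous_of_forall_enorm_sq_le D hAB fun U => ?_⟩, fun U x => rfl⟩
  rw [lp_enorm_sq_eq_tsum, lp_enorm_sq_eq_tsum]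
  exact hbound U

end Schur

section WeightedSpace

variable {d k : ℕ}

lemma jap_sq (m : Fin d → ℤ) : jap m ^ 2 = 1 + ∑ i, (m i : ℝ) ^ 2 :=
  Real.sq_sqrt (by positivity)

lemma jap_pos (m : Fin d → ℤ) : 0 < jap m :=
  Real.sqrt_pos.2 (by positivity)

lemma ofReal_jap_pow_ne_zero (k : ℕ) (m : Fin d → ℤ) : ((jap m ^ k : ℝ) : ℂ) ≠ 0 :=
  Complex.ofReal_ne_zero.2 (pow_pos (jap_pos m) k).ne'

/-- The Hilbert space `ℓ²(ℤ^d)`. -/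
abbrev L2 (d : ℕ) : Type := lp (fun _ : Fin d → ℤ => ℂ) 2

/-- The map `U ↦ ⟨·⟩^{-k} U`, which restricts to an isometric isomorphism of `ℓ²` onto `ℓ^{2,k}`. It
is defined on all functions because `ℓ^{2,k}` is described by the extended norm `w2 k`. -/
def unweight (k : ℕ) (U : (Fin d → ℤ) → ℂ) (m : Fin d → ℤ) : ℂ :=
  ((jap m ^ k : ℝ) : ℂ)⁻¹ * U m

lemma unweight_weight (k : ℕ) (u : (Fin d → ℤ) → ℂ) :
    unweight k (fun m => ((jap m ^ k : ℝ) : ℂ) * u m) = u :=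
  funext fun m => inv_mul_cancel_left₀ (ofReal_jap_pow_ne_zero k m) (u m)

lemma unweight_coe_injective (k : ℕ) : Function.Injective fun U : L2 d => unweight k U :=
  fun _ _ h => lp.ext <| funext fun m =>
    mul_left_cancel₀ (inv_ne_zero (ofReal_jap_pow_ne_zero k m)) (congrFun h m)

lemma unweight_sub_apply (U V : L2 d) (m : Fin d → ℤ) :
    unweight k (U - V : L2 d) m = unweight k U m - unweight k V m := by
  simp [unweight, mul_sub]

lemma unweight_add_apply (U V : L2 d) (m : Fin d → ℤ) :
    unweight k (U + V : L2 d) m = unweight k U m + unweight k V m :=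
  mul_add _ _ _

lemma unweight_sum_apply {ι : Type*} (s : Finset ι) (U : ι → L2 d) (m : Fin d → ℤ) :
    unweight k (∑ i ∈ s, U i : L2 d) m = ∑ i ∈ s, unweight k (U i) m := by
  simp only [unweight, lp.coeFn_sum, Finset.sum_apply, Finset.mul_sum]

lemma w2_unweight (k : ℕ) (U : (Fin d → ℤ) → ℂ) :
    w2 k (unweight k U) = (∑' m, ‖U m‖ₑ ^ 2) ^ (1 / 2 : ℝ) := by
  simp only [w2, lpn, unweight, mul_inv_cancel_left₀ (ofReal_jap_pow_ne_zero _ _)]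
  simp [enorm_eq_nnnorm]

lemma w2_unweight_coe (k : ℕ) (U : L2 d) : w2 k (unweight k U) = ‖U‖ₑ := by
  rw [w2_unweight, ← lp_enorm_sq_eq_tsum, ← ENNReal.rpow_natCast_mul]
  simp

lemma w2_lt_top_iff {u : (Fin d → ℤ) → ℂ} : w2 k u < ⊤ ↔ ∃ U : L2 d, u = unweight k U := by
  refine ⟨fun hu => ?_, ?_⟩
  · rw [← unweight_weight k u, w2_unweight, ENNReal.rpow_lt_top_iff_of_pos (by positivity),
      lt_top_iff_ne_top, ← memℓp_two_iff_tsum_enorm_sq] at hu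
    exact ⟨⟨_, hu⟩, (unweight_weight k u).symm⟩
  · rintro ⟨U, rfl⟩
    rw [w2_unweight_coe]
    exact enorm_lt_top

lemma w2_lt_top_iff_of_sub_lt_top {u v : (Fin d → ℤ) → ℂ} (h : w2 k (fun m => u m - v m) < ⊤) :
    w2 k u < ⊤ ↔ w2 k v < ⊤ := by
  obtain ⟨W, hW⟩ := w2_lt_top_iff.1 h
  have huv : ∀ m, u m - v m = unweight k W m := congrFun hW
  simp only [w2_lt_top_iff]
  constructor
  · rintro ⟨U, rfl⟩
    refine ⟨U - W, funext fun m => ?_⟩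
    rw [unweight_sub_apply, ← huv, sub_sub_cancel]
  · rintro ⟨V, rfl⟩
    refine ⟨V + W, funext fun m => ?_⟩
    rw [eq_add_of_sub_eq' (huv m), lp.coeFn_add]
    simp only [unweight, Pi.add_apply, mul_add]

lemma exists_mem_lt_top_of_setLIntegral_lt_top {α : Type*} [MeasurableSpace α] {μ : Measure α}
    {s : Set α} (hs : MeasurableSet s) (hμ : μ s ≠ 0) {f : α → ℝ≥0∞}
    (hf : ∫⁻ x in s, f x ∂μ < ⊤) : ∃ x ∈ s, f x < ⊤ := by
  by_contra! hcon
  rw [setLIntegral_congr_fun hs fun x hx => top_le_iff.1 (hcon x hx), setLIntegral_const,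
    ENNReal.top_mul hμ] at hf
  exact hf.ne rfl

section Curve

variable {S : Set ℝ}

lemma ContW.w2_lt_top {u : ℝ → (Fin d → ℤ) → ℂ} (hu : ContW k S u) (hS : IsPreconnected S)
    {s t : ℝ} (hs : s ∈ S) (ht : t ∈ S) (hus : w2 k (u s) < ⊤) : w2 k (u t) < ⊤ := by
  refine hS.induction₂' (fun x y => w2 k (u x) < ⊤ → w2 k (u y) < ⊤) (fun x hx => ?_)
    (fun x y z _ _ _ hxy hyz hx => hyz (hxy hx)) hs ht hus
  filter_upwards [(hu x hx).eventually (gt_mem_nhds ENNReal.zero_lt_top)] with y hy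
  exact ⟨(w2_lt_top_iff_of_sub_lt_top hy).2, (w2_lt_top_iff_of_sub_lt_top hy).1⟩

lemma exists_curve_eq_unweight {u : ℝ → (Fin d → ℤ) → ℂ} (hu : ∀ t ∈ S, w2 k (u t) < ⊤) :
    ∃ U : ℝ → L2 d, ∀ t ∈ S, u t = unweight k (U t) := by
  choose! U hU using fun t (ht : t ∈ S) => w2_lt_top_iff.1 (hu t ht)
  exact ⟨U, hU⟩

lemma tendsto_w2_unweight_sub_iff {α : Type*} {l : Filter α} {U : α → L2 d} {V : L2 d} :
    Tendsto (fun s => w2 k (unweight k (U s - V : L2 d))) l (nhds 0) ↔ Tendsto U l (nhds V) := by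
  simp_rw [w2_unweight_coe, ← edist_eq_enorm_sub]
  exact tendsto_iff_edist_tendsto_0.symm

lemma contW_iff_continuousOn {u : ℝ → (Fin d → ℤ) → ℂ} {U : ℝ → L2 d}
    (hu : ∀ t ∈ S, u t = unweight k (U t)) : ContW k S u ↔ ContinuousOn U S := by
  refine forall₂_congr fun t ht => (tendsto_congr' ?_).trans (tendsto_w2_unweight_sub_iff (k := k))
  filter_upwards [self_mem_nhdsWithin] with s hs
  congr 1 with m
  rw [hu s hs, hu t ht, unweight_sub_apply]

lemma derivW_iff_hasDerivWithinAt {u u' : ℝ → (Fin d → ℤ) → ℂ} {U U' : ℝ → L2 d}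
    (hu : ∀ t ∈ S, u t = unweight k (U t)) (hu' : ∀ t ∈ S, u' t = unweight k (U' t)) :
    DerivW k S u u' ↔ ∀ t ∈ S, HasDerivWithinAt U (U' t) S t := by
  refine forall₂_congr fun t ht => ?_
  rw [hasDerivWithinAt_iff_tendsto_slope]
  refine (tendsto_congr' ?_).trans (tendsto_w2_unweight_sub_iff (k := k))
  filter_upwards [self_mem_nhdsWithin] with s hs
  congr 1 with m
  rw [hu s hs.1, hu t ht, hu' t ht, unweight_sub_apply]
  simp only [unweight, slope_def_module, lp.coeFn_smul, lp.coeFn_sub, Pi.smul_apply, Pi.sub_apply,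
    Complex.real_smul]
  ring

end Curve

end WeightedSpace

section DerivativeBound

variable {d k : ℕ}

lemma one_add_sq_le_abs_four_mul_sq_sub_one (a : ℤ) :
    1 + (a : ℝ) ^ 2 ≤ |4 * (a : ℝ) ^ 2 - 1| := by
  rcases eq_or_ne a 0 with rfl | ha
  · simp
  · have h1 : (1 : ℝ) ≤ (a : ℝ) ^ 2 := by
      exact_mod_cast (pow_pos (abs_pos.2 ha) 2).trans_eq (sq_abs a)
    rw [abs_of_nonneg (by linarith)]
    linarith

lemma one_add_sq_le_jap_sq (j : Fin d) (m : Fin d → ℤ) : 1 + (m j : ℝ) ^ 2 ≤ jap m ^ 2 := by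
  rw [jap_sq]
  gcongr
  exact Finset.single_le_sum (f := fun i => (m i : ℝ) ^ 2) (fun i _ => sq_nonneg _)
    (Finset.mem_univ j)

lemma jap_single_sq (j : Fin d) (a : ℤ) : jap (Pi.single j a) ^ 2 = 1 + (a : ℝ) ^ 2 := by
  rw [jap_sq, Finset.sum_eq_single j (fun i _ hi => by simp [hi]) (by simp), Pi.single_eq_same]

lemma jap_sq_le_two_mul (x y : Fin d → ℤ) : jap x ^ 2 ≤ 2 * (jap y ^ 2 + jap (x - y) ^ 2) := by
  have hsum : ∑ i, (x i : ℝ) ^ 2 ≤ ∑ i, 2 * ((y i : ℝ) ^ 2 + ((x - y) i : ℝ) ^ 2) := by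
    refine Finset.sum_le_sum fun i _ => ?_
    simpa using add_sq_le (a := (y i : ℝ)) (b := ((x - y) i : ℝ))
  rw [← Finset.mul_sum, Finset.sum_add_distrib] at hsum
  simp only [jap_sq]
  linarith

lemma phi_single (j : Fin d) (a : ℤ) :
    phi d j (Pi.single j a) = -4 * Complex.I / (Real.pi * (4 * (a : ℂ) ^ 2 - 1)) := by
  have haxis : ∀ i, i ≠ j → (Pi.single j a : Fin d → ℤ) i = 0 := fun i hi => by simp [hi]
  rw [phi, if_pos haxis, Pi.single_eq_same]

lemma support_phi_subset (j : Fin d) : Function.support (phi d j) ⊆ Set.range (Pi.single j) := by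
  intro n hn
  have haxis : ∀ i, i ≠ j → n i = 0 := by
    by_contra h
    exact hn (if_neg h)
  exact ⟨n j, funext fun i => by
    rcases eq_or_ne i j with rfl | hi
    · simp
    · rw [Pi.single_eq_of_ne hi, haxis i hi]⟩

lemma norm_phi_le (j : Fin d) (n : Fin d → ℤ) : ‖phi d j n‖ ≤ 2 * (jap n ^ 2)⁻¹ := by
  by_cases hn : n ∈ Function.support (phi d j)
  · obtain ⟨a, rfl⟩ := support_phi_subset j hn
    have hden : Real.pi * (4 * (a : ℂ) ^ 2 - 1) = (Real.pi * (4 * (a : ℝ) ^ 2 - 1) : ℝ) := by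
      push_cast
      ring
    have hnorm : ‖phi d j (Pi.single j a)‖ = 4 / (Real.pi * |4 * (a : ℝ) ^ 2 - 1|) := by
      rw [phi_single, hden, norm_div, Complex.norm_real, norm_mul Real.pi,
        Real.norm_of_nonneg Real.pi_nonneg, Real.norm_eq_abs]
      simp
    calc ‖phi d j (Pi.single j a)‖ ≤ 4 / (2 * (1 + (a : ℝ) ^ 2)) := by
          rw [hnorm]
          gcongr
          · exact Real.two_le_pi
          · exact one_add_sq_le_abs_four_mul_sq_sub_one a
      _ = 2 * (jap (Pi.single j a) ^ 2)⁻¹ := by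
          rw [jap_single_sq]
          field_simp
          norm_num
  · rw [Function.notMem_support.1 hn, norm_zero]
    positivity

lemma jap_pow_div_sq_le (hk : k ≤ 1) (x m : Fin d → ℤ) :
    (jap x ^ k / jap m ^ k) ^ 2 ≤ 2 * (1 + jap (x - m) ^ 2 / jap m ^ 2) := by
  have hm := jap_pos m
  interval_cases k
  · have : 0 ≤ jap (x - m) ^ 2 / jap m ^ 2 := by positivity
    simp only [pow_zero, div_one, one_pow]
    linarith
  · calc (jap x ^ 1 / jap m ^ 1) ^ 2 = jap x ^ 2 / jap m ^ 2 := by rw [pow_one, pow_one, div_pow]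
      _ ≤ 2 * (jap m ^ 2 + jap (x - m) ^ 2) / jap m ^ 2 := by
          gcongr
          exact jap_sq_le_two_mul x m
      _ = 2 * (1 + jap (x - m) ^ 2 / jap m ^ 2) := by field_simp

/-- The kernel of `∂ⱼ` conjugated by the weight `⟨·⟩^k`, that is of the operator on `ℓ²`
corresponding to `∂ⱼ` on `ℓ^{2,k}`. -/
def weightedKernel (k : ℕ) (j : Fin d) (x m : Fin d → ℤ) : ℂ :=
  ((jap x ^ k : ℝ) : ℂ) * phi d j (x - m) * ((jap m ^ k : ℝ) : ℂ)⁻¹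

lemma norm_weightedKernel (k : ℕ) (j : Fin d) (x m : Fin d → ℤ) :
    ‖weightedKernel k j x m‖ = jap x ^ k / jap m ^ k * ‖phi d j (x - m)‖ := by
  have hx := jap_pos x
  have hm := jap_pos m
  rw [weightedKernel, norm_mul, norm_mul, norm_inv, Complex.norm_of_nonneg (by positivity),
    Complex.norm_of_nonneg (by positivity)]
  ring

lemma pd_unweight (k : ℕ) (j : Fin d) (U : (Fin d → ℤ) → ℂ) :
    pd j (unweight k U) = unweight k fun x => ∑' m, weightedKernel k j x m * U m := by
  funext x
  rw [unweight, pd, dconv, ← tsum_mul_left]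
  refine tsum_congr fun m => ?_
  have hx := ofReal_jap_pow_ne_zero k x
  rw [unweight, weightedKernel]
  field_simp

-- The growth `⟨x - m⟩²` of the squared ratio of the weights is absorbed by one of the two factors
-- `φⱼ(x - m) = O(⟨x - m⟩⁻²)`.
lemma norm_weightedKernel_sq_le (hk : k ≤ 1) (j : Fin d) (x m : Fin d → ℤ) :
    ‖weightedKernel k j x m‖ ^ 2 ≤
      4 * ((jap (x - m) ^ 2)⁻¹ + (jap m ^ 2)⁻¹) * ‖phi d j (x - m)‖ := by
  have hφ := norm_phi_le j (x - m)
  have hn := jap_pos (x - m)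
  have hm := jap_pos m
  set φ := ‖phi d j (x - m)‖
  calc ‖weightedKernel k j x m‖ ^ 2 = (jap x ^ k / jap m ^ k) ^ 2 * φ * φ := by
        rw [norm_weightedKernel]
        ring
    _ ≤ 2 * (1 + jap (x - m) ^ 2 / jap m ^ 2) * (2 * (jap (x - m) ^ 2)⁻¹) * φ := by
        gcongr
        · exact jap_pow_div_sq_le hk x m
    _ = 4 * ((jap (x - m) ^ 2)⁻¹ + (jap m ^ 2)⁻¹) * φ := by
        field_simp
        ring

/-- The sum `∑ₐ (1 + a²)⁻¹` over `ℤ`, which controls every sum of `⟨·⟩⁻²` along a coordinate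
line. -/
def lineSum : ℝ≥0∞ := ∑' a : ℤ, ENNReal.ofReal (1 + (a : ℝ) ^ 2)⁻¹

lemma lineSum_ne_top : lineSum ≠ ⊤ := by
  have hsum : Summable fun a : ℤ => (1 + (a : ℝ) ^ 2)⁻¹ := by
    refine Summable.of_norm_bounded_eventually (Real.summable_one_div_int_pow.2 one_lt_two) ?_
    filter_upwards [(Set.finite_singleton (0 : ℤ)).compl_mem_cofinite] with a ha
    have ha' : (a : ℝ) ≠ 0 := Int.cast_ne_zero.2 ha
    rw [Real.norm_of_nonneg (by positivity), one_div]
    gcongr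
    linarith
  rw [lineSum, ← ENNReal.ofReal_tsum_of_nonneg (fun _ => by positivity) hsum]
  exact ENNReal.ofReal_ne_top

lemma tsum_inv_jap_sub_single_sq_le (j : Fin d) (x : Fin d → ℤ) :
    ∑' a : ℤ, ENNReal.ofReal (jap (x - Pi.single j a) ^ 2)⁻¹ ≤ lineSum := by
  rw [lineSum,
    ← (Equiv.subLeft (x j)).tsum_eq fun a : ℤ => ENNReal.ofReal (1 + (a : ℝ) ^ 2)⁻¹]
  refine ENNReal.tsum_le_tsum fun a => ENNReal.ofReal_le_ofReal ?_
  have hj : (x - Pi.single j a : Fin d → ℤ) j = x j - a := by simp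
  have hle := one_add_sq_le_jap_sq j (x - Pi.single j a : Fin d → ℤ)
  rw [hj] at hle
  rw [Equiv.subLeft_apply]
  gcongr

lemma tsum_enorm_phi_le (j : Fin d) : ∑' n, ‖phi d j n‖ₑ ≤ 2 * lineSum := by
  have hsupp : Function.support (fun n => ‖phi d j n‖ₑ) ⊆ Set.range (Pi.single j) := by
    simpa [Function.support] using support_phi_subset j
  rw [← (Pi.single_injective j).tsum_eq hsupp, lineSum, ← ENNReal.tsum_mul_left]
  refine ENNReal.tsum_le_tsum fun a => ?_
  rw [← ofReal_norm, ← ENNReal.ofReal_ofNat 2, ← ENNReal.ofReal_mul (by norm_num),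
    ← jap_single_sq j]
  exact ENNReal.ofReal_le_ofReal (norm_phi_le j _)

/-- The row weight in the Schur test for `weightedKernel`, as a function of `x` and the increment
`n = x - m`. -/
def rowWeight (j : Fin d) (x n : Fin d → ℤ) : ℝ≥0∞ :=
  (Set.range (Pi.single j)).indicator
    (fun n => 4 * (ENNReal.ofReal (jap n ^ 2)⁻¹ + ENNReal.ofReal (jap (x - n) ^ 2)⁻¹)) n

lemma enorm_weightedKernel_sq_le (hk : k ≤ 1) (j : Fin d) (x m : Fin d → ℤ) :
    ‖weightedKernel k j x m‖ₑ ^ 2 ≤ rowWeight j x (x - m) * ‖phi d j (x - m)‖ₑ := by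
  by_cases hn : x - m ∈ Function.support (phi d j)
  · rw [rowWeight, Set.indicator_of_mem (support_phi_subset j hn), sub_sub_cancel, ← ofReal_norm,
      ← ofReal_norm, ← ENNReal.ofReal_pow (norm_nonneg _),
      ← ENNReal.ofReal_add (by positivity) (by positivity), ← ENNReal.ofReal_ofNat 4,
      ← ENNReal.ofReal_mul (by positivity), ← ENNReal.ofReal_mul (by positivity)]
    exact ENNReal.ofReal_le_ofReal (norm_weightedKernel_sq_le hk j x m)
  · simp [weightedKernel, Function.notMem_support.1 hn]

lemma tsum_rowWeight_le (j : Fin d) (x : Fin d → ℤ) :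
    ∑' m, rowWeight j x (x - m) ≤ 4 * (lineSum + lineSum) := by
  calc ∑' m, rowWeight j x (x - m) = ∑' n, rowWeight j x n :=
        (Equiv.subLeft x).tsum_eq (rowWeight j x)
    _ = ∑' a : ℤ, 4 * (ENNReal.ofReal (jap (Pi.single j a : Fin d → ℤ) ^ 2)⁻¹ +
          ENNReal.ofReal (jap (x - Pi.single j a) ^ 2)⁻¹) := by
        simp only [rowWeight]
        rw [← tsum_subtype]
        exact tsum_range (fun n => 4 * (ENNReal.ofReal (jap n ^ 2)⁻¹ +
          ENNReal.ofReal (jap (x - n) ^ 2)⁻¹)) (Pi.single_injective j)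
    _ ≤ 4 * (lineSum + lineSum) := by
        rw [ENNReal.tsum_mul_left, ENNReal.tsum_add]
        simp only [jap_single_sq]
        gcongr
        · rfl
        · exact tsum_inv_jap_sub_single_sq_le j x

theorem exists_clm_unweight_eq_pd (hk : k ≤ 1) (j : Fin d) :
    ∃ D : L2 d →L[ℂ] L2 d, ∀ U : L2 d, unweight k (D U) = pd j (unweight k U) := by
  obtain ⟨D, hD⟩ := exists_clm_lp_two_of_schur (A := 4 * (lineSum + lineSum)) (B := 2 * lineSum)
    (ENNReal.mul_ne_top (by simp) (ENNReal.add_ne_top.2 ⟨lineSum_ne_top, lineSum_ne_top⟩))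
    (ENNReal.mul_ne_top (by simp) lineSum_ne_top) (enorm_weightedKernel_sq_le hk j)
    (tsum_rowWeight_le j) fun m =>
      ((Equiv.subRight m).tsum_eq fun n => ‖phi d j n‖ₑ).trans_le (tsum_enorm_phi_le j)
  exact ⟨D, fun U => by rw [pd_unweight, ← funext (hD U)]⟩

end DerivativeBound


section WaveOperator

variable {d k : ℕ}

/-- The Banach space `ℓ^∞(ℤ^d)`. -/
abbrev LInf (d : ℕ) : Type := lp (fun _ : Fin d → ℤ => ℂ) ∞

lemma lpn_top_lt_top_iff {f : (Fin d → ℤ) → ℂ} : lpn ⊤ f < ⊤ ↔ Memℓp f ∞ := by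
  rw [lpn, if_pos rfl, ENNReal.iSup_coe_lt_top, memℓp_infty_iff, ← NNReal.bddAbove_coe,
    ← Set.range_comp]
  rfl

lemma lpn_top_coe (G : LInf d) : lpn ⊤ G = ‖G‖ₑ := by
  have hbdd : BddAbove (Set.range fun m => ‖G m‖₊) := by
    have h := lpn_top_lt_top_iff.2 (lp.memℓp G)
    rwa [lpn, if_pos rfl, ENNReal.iSup_coe_lt_top] at h
  have hnorm : ‖G‖₊ = ⨆ m, ‖G m‖₊ := NNReal.eq <| by
    rw [NNReal.coe_iSup, coe_nnnorm, lp.norm_eq_ciSup]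
    rfl
  rw [lpn, if_pos rfl, enorm_eq_nnnorm, hnorm, ENNReal.coe_iSup hbdd]

lemma lpn_top_ofReal (f : (Fin d → ℤ) → ℝ) : lpn ⊤ (fun m => (f m : ℂ)) = linf f := by
  simp [lpn, linf]

lemma linf_lt_top_of_abs_le {f : (Fin d → ℤ) → ℝ} {M : ℝ} (hf : ∀ m, |f m| ≤ M) : linf f < ⊤ :=
  ENNReal.iSup_coe_lt_top.2
    ⟨M.toNNReal, Set.forall_mem_range.2 fun m => NNReal.le_toNNReal_of_coe_le (hf m)⟩

lemma exists_continuousOn_curve_lInf {S : Set ℝ} {g : ℝ → (Fin d → ℤ) → ℂ}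
    (hg : ∀ t ∈ S, lpn ⊤ (g t) < ⊤)
    (hgC : ∀ t ∈ S, Tendsto (fun s => lpn ⊤ fun m => g s m - g t m) (nhdsWithin t S) (nhds 0)) :
    ∃ G : ℝ → LInf d, ContinuousOn G S ∧ ∀ t ∈ S, g t = G t := by
  have hmem : ∀ t ∈ S, ∃ G : LInf d, g t = G := fun t ht =>
    ⟨⟨g t, lpn_top_lt_top_iff.1 (hg t ht)⟩, rfl⟩
  choose! G hG using hmem
  refine ⟨G, fun t ht => tendsto_iff_edist_tendsto_0.2 ((tendsto_congr' ?_).1 (hgC t ht)), hG⟩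
  filter_upwards [self_mem_nhdsWithin] with s hs
  rw [edist_eq_enorm_sub, ← lpn_top_coe, hG s hs, hG t ht]
  rfl

/-- Pointwise multiplication `ℓ^∞ × ℓ² → ℓ²`. -/
def mulL2 (d : ℕ) : LInf d →L[ℂ] L2 d →L[ℂ] L2 d :=
  lp.holderL 2 (fun _ => ContinuousLinearMap.mul ℂ ℂ) (K := 1)
    fun _ => ContinuousLinearMap.opNorm_mul_le ℂ ℂ

lemma unweight_mulL2 (k : ℕ) (G : LInf d) (U : L2 d) (x : Fin d → ℤ) :
    unweight k (mulL2 d G U) x = G x * unweight k U x :=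
  mul_left_comm _ (G x) (U x)

/-- The operator on `ℓ²` corresponding to `∂ⱼ` on `ℓ^{2,k}` under the isometry `unweight k`. -/
def weightedPd (hk : k ≤ 1) (j : Fin d) : L2 d →L[ℂ] L2 d :=
  (exists_clm_unweight_eq_pd hk j).choose

lemma unweight_weightedPd (hk : k ≤ 1) (j : Fin d) (U : L2 d) :
    unweight k (weightedPd hk j U) = pd j (unweight k U) :=
  (exists_clm_unweight_eq_pd hk j).choose_spec U

/-- The operator on `ℓ²` corresponding to `∑ⱼₗ Gʲˡ ∂ⱼ∂ₗ` on `ℓ^{2,k}` under `unweight k`. -/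
def waveOp (hk : k ≤ 1) (G : Fin d → Fin d → LInf d) : L2 d →L[ℂ] L2 d :=
  ∑ j, ∑ l, mulL2 d (G j l) ∘L weightedPd hk j ∘L weightedPd hk l

lemma unweight_waveOp (hk : k ≤ 1) (G : Fin d → Fin d → LInf d) (U : L2 d) (x : Fin d → ℤ) :
    unweight k (waveOp hk G U) x = ∑ j, ∑ l, G j l x * pd j (pd l (unweight k U)) x := by
  simp only [waveOp, _root_.sum_apply, ContinuousLinearMap.comp_apply,
    unweight_sum_apply, unweight_mulL2, unweight_weightedPd]

lemma continuousOn_waveOp (hk : k ≤ 1) {S : Set ℝ} {G : Fin d → Fin d → ℝ → LInf d}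
    (hG : ∀ j l, ContinuousOn (G j l) S) :
    ContinuousOn (fun t => waveOp hk fun j l => G j l t) S :=
  continuousOn_finsetSum _ fun j _ => continuousOn_finsetSum _ fun l _ =>
    ((mulL2 d).continuous.comp_continuousOn (hG j l)).clm_comp continuousOn_const

end WaveOperator

section Transfer

variable {d k : ℕ} {a b : ℝ} {S : Set ℝ} {g : Fin d → Fin d → ℝ → (Fin d → ℤ) → ℂ}
  {F : ℝ → (Fin d → ℤ) → ℂ} {G : Fin d → Fin d → ℝ → LInf d} {Φ : ℝ → L2 d}

lemma isC2_unweight_of_hasDerivWithinAt {U U₁ U₂ : ℝ → L2 d}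
    (h : ∀ t ∈ S, HasDerivWithinAt U (U₁ t) S t)
    (h₁ : ∀ t ∈ S, HasDerivWithinAt U₁ (U₂ t) S t) (h₂ : ContinuousOn U₂ S) :
    IsC2 k S (fun t => unweight k (U t)) (fun t => unweight k (U₁ t))
      (fun t => unweight k (U₂ t)) where
  mem0 t _ := w2_lt_top_iff.2 ⟨U t, rfl⟩
  mem1 t _ := w2_lt_top_iff.2 ⟨U₁ t, rfl⟩
  mem2 t _ := w2_lt_top_iff.2 ⟨U₂ t, rfl⟩
  cont0 := (contW_iff_continuousOn fun _ _ => rfl).2 fun t ht => (h t ht).continuousWithinAt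
  cont1 := (contW_iff_continuousOn fun _ _ => rfl).2 fun t ht => (h₁ t ht).continuousWithinAt
  cont2 := (contW_iff_continuousOn fun _ _ => rfl).2 h₂
  hder1 := (derivW_iff_hasDerivWithinAt (fun _ _ => rfl) fun _ _ => rfl).2 h
  hder2 := (derivW_iff_hasDerivWithinAt (fun _ _ => rfl) fun _ _ => rfl).2 h₁

/-- The right-hand side of the wave equation `∂ₜ²u = ∑ⱼₗ Gʲˡ ∂ⱼ∂ₗu + F` on `ℓ^{2,k}`, transported
to `ℓ²` by `unweight k`; `Φ` is the transported source `F`. -/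
def waveField (hk : k ≤ 1) (G : Fin d → Fin d → ℝ → LInf d) (Φ : ℝ → L2 d) (t : ℝ) (U : L2 d) :
    L2 d :=
  waveOp hk (fun j l => G j l t) U + Φ t

lemma unweight_waveField (hk : k ≤ 1) (t : ℝ) (U : L2 d) (x : Fin d → ℤ) :
    unweight k (waveField hk G Φ t U) x =
      ∑ j, ∑ l, G j l t x * pd j (pd l (unweight k U)) x + unweight k (Φ t) x := by
  rw [waveField, unweight_add_apply, unweight_waveOp]

lemma SolvesSecondOrder.isC2_unweight (hk : k ≤ 1) (hG : ∀ j l, ContinuousOn (G j l) S)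
    (hΦ : ContinuousOn Φ S) {U V : ℝ → L2 d} (h : SolvesSecondOrder S (waveField hk G Φ) U V) :
    IsC2 k S (fun t => unweight k (U t)) (fun t => unweight k (V t))
      (fun t => unweight k (waveField hk G Φ t (U t))) :=
  isC2_unweight_of_hasDerivWithinAt h.hasDerivWithinAt h.hasDerivWithinAt_velocity <|
    ((continuousOn_waveOp hk hG).clm_apply fun t ht =>
      (h.hasDerivWithinAt t ht).continuousWithinAt).add hΦ

lemma IsC2.exists_solvesSecondOrder (hk : k ≤ 1) (hG : ∀ t ∈ S, ∀ j l, g j l t = G j l t)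
    (hΦ : ∀ t ∈ S, F t = unweight k (Φ t)) {u u1 u2 : ℝ → (Fin d → ℤ) → ℂ}
    (hu : IsC2 k S u u1 u2)
    (heq : ∀ t ∈ S, ∀ x, u2 t x - ∑ j, ∑ l, g j l t x * pd j (pd l (u t)) x = F t x) :
    ∃ U V : ℝ → L2 d, SolvesSecondOrder S (waveField hk G Φ) U V ∧
      (∀ t ∈ S, u t = unweight k (U t)) ∧ ∀ t ∈ S, u1 t = unweight k (V t) := by
  obtain ⟨U, hU⟩ := exists_curve_eq_unweight hu.mem0
  obtain ⟨V, hV⟩ := exists_curve_eq_unweight hu.mem1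
  have hacc : ∀ t ∈ S, u2 t = unweight k (waveField hk G Φ t (U t)) := fun t ht => by
    funext x
    rw [unweight_waveField, ← hU t ht, ← hΦ t ht, ← heq t ht x]
    simp only [hG t ht, add_sub_cancel]
  exact ⟨U, V, ⟨(derivW_iff_hasDerivWithinAt hU hV).1 hu.hder1,
    (derivW_iff_hasDerivWithinAt hV hacc).1 hu.hder2⟩, hU, hV⟩

lemma w2_lt_top_of_setLIntegral_lt_top (hab : a < b) (hFC : ContW k (Set.Icc a b) F)
    (hF : ∫⁻ s in Set.Icc a b, w2 k (F s) < ⊤) : ∀ t ∈ Set.Icc a b, w2 k (F t) < ⊤ := by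
  obtain ⟨s, hs, hFs⟩ := exists_mem_lt_top_of_setLIntegral_lt_top measurableSet_Icc
    (by simpa using hab) hF
  exact fun t ht => hFC.w2_lt_top isPreconnected_Icc hs ht hFs

end Transfer

theorem stmt11_general {d k : ℕ} (hk : k ≤ 1) {a b : ℝ} (hab : a ≤ b)
    {g : Fin d → Fin d → ℝ → (Fin d → ℤ) → ℂ}
    (hg : ∀ j l, ∀ t ∈ Set.Icc a b, lpn ⊤ (g j l t) < ⊤)
    (hgC : ∀ j l, ∀ t ∈ Set.Icc a b, Tendsto (fun s => lpn ⊤ fun m => g j l s m - g j l t m)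
      (nhdsWithin t (Set.Icc a b)) (nhds 0))
    {F : ℝ → (Fin d → ℤ) → ℂ} (hF : ∀ t ∈ Set.Icc a b, w2 k (F t) < ⊤)
    (hFC : ContW k (Set.Icc a b) F) {f h : (Fin d → ℤ) → ℂ} (hf : w2 k f < ⊤) (hh : w2 k h < ⊤) :
    ∃ u u1 u2 : ℝ → (Fin d → ℤ) → ℂ,
      (IsC2 k (Set.Icc a b) u u1 u2 ∧
        (∀ t ∈ Set.Icc a b, ∀ x,
          u2 t x - ∑ j, ∑ l, g j l t x * pd j (pd l (u t)) x = F t x) ∧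
        (∀ x, u a x = f x) ∧ (∀ x, u1 a x = h x)) ∧
      ∀ v v1 v2 : ℝ → (Fin d → ℤ) → ℂ,
        (IsC2 k (Set.Icc a b) v v1 v2 ∧
          (∀ t ∈ Set.Icc a b, ∀ x,
            v2 t x - ∑ j, ∑ l, g j l t x * pd j (pd l (v t)) x = F t x) ∧
          (∀ x, v a x = f x) ∧ (∀ x, v1 a x = h x)) →
        ∀ t ∈ Set.Icc a b, ∀ x, v t x = u t x := by
  choose G hGC hG using fun j l => exists_continuousOn_curve_lInf (hg j l) (hgC j l)
  obtain ⟨Φ, hΦ⟩ := exists_curve_eq_unweight hF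
  have hΦC := (contW_iff_continuousOn hΦ).1 hFC
  obtain ⟨U₀, rfl⟩ := w2_lt_top_iff.1 hf
  obtain ⟨V₀, rfl⟩ := w2_lt_top_iff.1 hh
  have hA := continuousOn_waveOp hk hGC
  obtain ⟨U, V, hUV, hU₀, hV₀⟩ := exists_solvesSecondOrder_Icc_linear hab hA hΦC U₀ V₀
  refine ⟨_, _, _, ⟨hUV.isC2_unweight hk hGC hΦC, fun t ht x => ?_, fun x => by rw [hU₀],
    fun x => by rw [hV₀]⟩, ?_⟩
  · rw [unweight_waveField, ← hΦ t ht]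
    simp only [hG _ _ t ht, add_sub_cancel_left]
  · rintro v v1 v2 ⟨hv, heq, hv₀, hv₁⟩ t ht x
    obtain ⟨W, Z, hWZ, hW, hZ⟩ := hv.exists_solvesSecondOrder hk
      (fun t ht j l => hG j l t ht) hΦ heq
    have ha := Set.left_mem_Icc.2 hab
    have hWa : W a = U a := unweight_coe_injective k <| by
      simpa only [hU₀] using (hW a ha).symm.trans (funext hv₀)
    have hZa : Z a = V a := unweight_coe_injective k <| by
      simpa only [hV₀] using (hZ a ha).symm.trans (funext hv₁)
    rw [hW t ht, hWZ.eqOn_Icc_linear hA hUV hWa hZa ht]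

/-- global well-posedness of the generalized linear discrete wave
equation `∂ₜ²u - Σ_{j,l} g^{jl}∂ⱼ∂ₗu = F` with data `f, g ∈ ℓ^{2,k}`, `k ∈ {0,1}`:
existence and uniqueness of a classical solution `u ∈ C²([0,T];ℓ^{2,k}(ℤ^d))`. -/
theorem stmt11 (d : ℕ) (hd : 0 < d) (k : ℕ) (hk : k = 0 ∨ k = 1) (T : ℝ) (hT : 0 < T)
    (g : Fin d → Fin d → ℝ → (Fin d → ℤ) → ℝ)
    (hgB : ∀ j l, ∃ M : ℝ, ∀ t ∈ Set.Icc (0 : ℝ) T, ∀ m, |g j l t m| ≤ M)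
    (hgC : ∀ j l, ∀ t ∈ Set.Icc (0 : ℝ) T,
      Tendsto (fun s => linf (fun m => g j l s m - g j l t m))
        (nhdsWithin t (Set.Icc 0 T)) (nhds (0 : ℝ≥0∞)))
    (F : ℝ → (Fin d → ℤ) → ℂ)
    (hFL : (∫⁻ s in Set.Icc (0 : ℝ) T, w2 k (F s)) < ⊤)
    (hFC : ∀ t ∈ Set.Icc (0 : ℝ) T,
      Tendsto (fun s => w2 k (fun m => F s m - F t m))
        (nhdsWithin t (Set.Icc 0 T)) (nhds (0 : ℝ≥0∞)))
    (f h : (Fin d → ℤ) → ℂ) (hf : w2 k f < ⊤) (hh : w2 k h < ⊤) :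
    ∃ u u1 u2 : ℝ → (Fin d → ℤ) → ℂ,
      (IsC2 k (Set.Icc 0 T) u u1 u2 ∧
        (∀ t ∈ Set.Icc (0 : ℝ) T, ∀ x,
          u2 t x - ∑ j, ∑ l, (g j l t x : ℂ) * pd j (pd l (u t)) x = F t x) ∧
        (∀ x, u 0 x = f x) ∧ (∀ x, u1 0 x = h x)) ∧
      ∀ v v1 v2 : ℝ → (Fin d → ℤ) → ℂ,
        (IsC2 k (Set.Icc 0 T) v v1 v2 ∧
          (∀ t ∈ Set.Icc (0 : ℝ) T, ∀ x,
            v2 t x - ∑ j, ∑ l, (g j l t x : ℂ) * pd j (pd l (v t)) x = F t x) ∧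
          (∀ x, v 0 x = f x) ∧ (∀ x, v1 0 x = h x)) →
        ∀ t ∈ Set.Icc (0 : ℝ) T, ∀ x, v t x = u t x := by
  have hFmem := w2_lt_top_of_setLIntegral_lt_top hT hFC hFL
  refine stmt11_general (by lia) hT.le (fun j l t ht => ?_) (fun j l t ht => ?_) hFmem hFC hf hh
  · obtain ⟨M, hM⟩ := hgB j l
    exact (lpn_top_ofReal _).trans_lt (linf_lt_top_of_abs_le (hM t ht))
  · simpa only [← Complex.ofReal_sub, lpn_top_ofReal] using hgC j l t ht
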